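/- Let F₁, F₂ : ℂ⁺ → ℂ⁺ be analytic functions, neither a conformal automorphism of ℂ⁺, with lim_{y→+∞} F_j(iy)/(iy) = 1 for j = 1,2, and let ω be the unique analytic self-map of ℂ⁺ satisfying F₂(F₁(ω(z)) − ω(z) + z) − (F₁(ω(z)) − ω(z)) = ω(z) for all z ∈ ℂ⁺. Fix a ∈ ℝ and define u_j(w) = F_j(w) − w + a for w ∈ ℂ⁺, j = 1,2, and assume that u₂ ∘ u₁ is not a conformal automorphism of ℂ⁺. If the cluster set C(ω, a) intersects ℂ⁺, then ω extends analytically to a neighborhood of a in ℂ. -/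

import Mathlib

open Complex Filter Set Topology

/-- The open upper half-plane `ℂ⁺ = {z : ℂ | Im z > 0}`. -/
def UHP : Set ℂ := {z : ℂ | 0 < z.im}


lemma uhp_isOpen : IsOpen UHP := isOpen_lt continuous_const Complex.continuous_im

lemma uhp_convex : Convex ℝ UHP := convex_halfSpace_im_gt 0

/-- Cayley-type map from the disc to the half plane. -/
noncomputable def cayT (v ζ : ℂ) : ℂ := (v - (starRingEnd ℂ) v * ζ) / (1 - ζ)

/-- Cayley-type map from the half plane to the disc. -/
noncomputable def cayS (p w : ℂ) : ℂ := (w - p) / (w - (starRingEnd ℂ) p)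

lemma one_sub_ne {ζ : ℂ} (h : ‖ζ‖ < 1) : 1 - ζ ≠ 0 := by
  intro h0
  have : ζ = 1 := by linear_combination -h0
  rw [this] at h
  simp at h

lemma sub_conj_ne {p w : ℂ} (hp : p ∈ UHP) (hw : w ∈ UHP) : w - (starRingEnd ℂ) p ≠ 0 := by
  intro h0
  have := congrArg Complex.im h0
  simp only [UHP, mem_ofPred_eq] at hp hw
  simp at this
  linarith

lemma cayT_mem {v ζ : ℂ} (hv : v ∈ UHP) (h : ‖ζ‖ < 1) : cayT v ζ ∈ UHP := by
  have h1 := one_sub_ne h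
  have hn : 0 < Complex.normSq (1 - ζ) := Complex.normSq_pos.2 h1
  have h2 : Complex.normSq ζ < 1 := by
    rw [Complex.normSq_eq_norm_sq]
    nlinarith [norm_nonneg ζ]
  simp only [UHP, mem_ofPred_eq] at hv ⊢
  have : (cayT v ζ).im = v.im * (1 - Complex.normSq ζ) / Complex.normSq (1 - ζ) := by
    rw [cayT, Complex.div_im]
    field_simp
    simp [Complex.normSq_apply]
    ring
  rw [this]
  have : 0 < 1 - Complex.normSq ζ := by linarith
  positivity

lemma normSq_conj_sub (p w : ℂ) :
    Complex.normSq (w - (starRingEnd ℂ) p) = Complex.normSq (w - p) + 4 * w.im * p.im := by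
  simp [Complex.normSq_apply]
  ring

lemma cayS_norm {p w : ℂ} (hp : p ∈ UHP) (hw : w ∈ UHP) : ‖cayS p w‖ < 1 := by
  have h1 := sub_conj_ne hp hw
  rw [cayS, norm_div, div_lt_one (norm_pos_iff.2 h1)]
  apply lt_of_pow_lt_pow_left₀ 2 (norm_nonneg _)
  rw [← Complex.normSq_eq_norm_sq, ← Complex.normSq_eq_norm_sq, normSq_conj_sub]
  simp only [UHP, mem_ofPred_eq] at hp hw
  have : 0 < w.im * p.im := by positivity
  linarith

lemma cayT_cayS {v w : ℂ} (hv : v ∈ UHP) (hw : w ∈ UHP) : cayT v (cayS v w) = w := by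
  have h1 := sub_conj_ne hv hw
  have h2 := one_sub_ne (cayS_norm hv hw)
  have h3 := sub_conj_ne hv hv
  rw [cayT, div_eq_iff h2, cayS]
  field_simp
  ring

lemma cayS_cayT {v ζ : ℂ} (hv : v ∈ UHP) (h : ‖ζ‖ < 1) : cayS v (cayT v ζ) = ζ := by
  have h1 := sub_conj_ne hv (cayT_mem hv h)
  have h2 := one_sub_ne h
  rw [cayS, div_eq_iff h1, cayT]
  field_simp
  ring

lemma cayS_inj {p w w' : ℂ} (hp : p ∈ UHP) (hw : w ∈ UHP) (hw' : w' ∈ UHP)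
    (h : cayS p w = cayS p w') : w = w' := by
  rw [← cayT_cayS hp hw, h, cayT_cayS hp hw']

lemma cayT_diff {v : ℂ} : DifferentiableOn ℂ (cayT v) (Metric.ball 0 1) := by
  intro ζ hζ
  have h := one_sub_ne (mem_ball_zero_iff.1 hζ)
  unfold cayT
  exact DifferentiableAt.differentiableWithinAt (by fun_prop (disch := assumption))

lemma cayS_diff {p : ℂ} (hp : p ∈ UHP) : DifferentiableOn ℂ (cayS p) UHP := by
  intro ζ hζ
  have h := sub_conj_ne hp hζ
  unfold cayS
  exact DifferentiableAt.differentiableWithinAt (by fun_prop (disch := assumption))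

lemma cay_comp_diff {F : ℂ → ℂ} (hd : DifferentiableOn ℂ F UHP) (hm : MapsTo F UHP UHP)
    {v p : ℂ} (hv : v ∈ UHP) (hp : p ∈ UHP) :
    DifferentiableOn ℂ (fun ζ => cayS p (F (cayT v ζ))) (Metric.ball 0 1) := by
  have m1 : MapsTo (cayT v) (Metric.ball 0 1) UHP :=
    fun ζ hζ => cayT_mem hv (mem_ball_zero_iff.1 hζ)
  exact (cayS_diff hp).comp (hd.comp cayT_diff m1) (hm.comp m1)

lemma cay_comp_maps {F : ℂ → ℂ} (hm : MapsTo F UHP UHP)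
    {v p : ℂ} (hv : v ∈ UHP) (hp : p ∈ UHP) :
    MapsTo (fun ζ => cayS p (F (cayT v ζ))) (Metric.ball 0 1) (Metric.closedBall 0 1) := by
  intro ζ hζ
  rw [mem_closedBall_zero_iff]
  exact (cayS_norm hp (hm (cayT_mem hv (mem_ball_zero_iff.1 hζ)))).le

lemma cayT_zero (v : ℂ) : cayT v 0 = v := by simp [cayT]
lemma cayS_self (v : ℂ) : cayS v v = 0 := by simp [cayS]

/-- Schwarz-Pick in the half plane. -/
lemma schwarz_pick {F : ℂ → ℂ} (hd : DifferentiableOn ℂ F UHP) (hm : MapsTo F UHP UHP)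
    {v w : ℂ} (hv : v ∈ UHP) (hw : w ∈ UHP) :
    Complex.normSq (F w - F v) * (w.im * v.im) ≤
      Complex.normSq (w - v) * ((F w).im * (F v).im) := by
  have key := Complex.norm_le_norm_of_mapsTo_ball (cay_comp_diff hd hm hv (hm hv))
    (cay_comp_maps hm hv (hm hv)) (by simp [cayT_zero, cayS_self]) (cayS_norm hv hw)
  simp only [cayT_cayS hv hw] at key
  have h1 := sub_conj_ne hv hw
  have h2 := sub_conj_ne (hm hv) (hm hw)
  rw [cayS, cayS, norm_div, norm_div, div_le_div_iff₀ (norm_pos_iff.2 h2) (norm_pos_iff.2 h1)] at key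
  have := pow_le_pow_left₀ (by positivity) key 2
  rw [mul_pow, mul_pow] at this
  simp only [← Complex.normSq_eq_norm_sq, normSq_conj_sub] at this
  nlinarith

lemma eq_id_of_deriv {f : ℂ → ℂ} (hd : DifferentiableOn ℂ f UHP) (hm : MapsTo f UHP UHP)
    {L : ℂ} (hL : L ∈ UHP) (hfL : f L = L) (hf' : HasDerivAt f 1 L) : EqOn f id UHP := by
  have hne := sub_conj_ne hL hL
  have hT : HasDerivAt (cayT L) (L - (starRingEnd ℂ) L) 0 := by
    have h1 : HasDerivAt (fun ζ : ℂ => L - (starRingEnd ℂ) L * ζ) (-((starRingEnd ℂ) L * 1)) 0 :=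
      ((hasDerivAt_id (0 : ℂ)).const_mul _).const_sub L
    have h2 : HasDerivAt (fun ζ : ℂ => 1 - ζ) (-1) 0 := (hasDerivAt_id (0 : ℂ)).const_sub 1
    refine (h1.div h2 (by simp)).congr_deriv ?_
    simp
    ring
  have hS : HasDerivAt (cayS L) (L - (starRingEnd ℂ) L)⁻¹ L := by
    have h1 : HasDerivAt (fun w : ℂ => w - L) 1 L := (hasDerivAt_id L).sub_const L
    have h2 : HasDerivAt (fun w : ℂ => w - (starRingEnd ℂ) L) 1 L := (hasDerivAt_id L).sub_const _
    refine (h1.div h2 hne).congr_deriv ?_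
    field_simp
    ring
  have hfT : HasDerivAt (fun ζ => f (cayT L ζ)) (1 * (L - (starRingEnd ℂ) L)) 0 :=
    HasDerivAt.comp (h₂ := f) (h := cayT L) 0 (by rwa [cayT_zero]) hT
  have hh : HasDerivAt (fun ζ => cayS L (f (cayT L ζ)))
      ((L - (starRingEnd ℂ) L)⁻¹ * (1 * (L - (starRingEnd ℂ) L))) 0 :=
    HasDerivAt.comp (h₂ := cayS L) (h := fun ζ => f (cayT L ζ)) 0
      (by rwa [cayT_zero, hfL]) hfT
  have hder : deriv (fun ζ => cayS L (f (cayT L ζ))) 0 = 1 := by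
    rw [hh.deriv]
    field_simp
  have h0 : (fun ζ => cayS L (f (cayT L ζ))) 0 = 0 := by simp [cayT_zero, hfL, cayS_self]
  have key := Complex.affine_of_mapsTo_ball_of_norm_dslope_eq_div (cay_comp_diff hd hm hL hL)
    (R₂ := 1) (by beta_reduce at h0 ⊢; rw [h0]; exact cay_comp_maps hm hL hL) (Metric.mem_ball_self one_pos)
    (by rw [dslope_same, hder]; simp)
  intro w hw
  have := key (mem_ball_zero_iff.2 (cayS_norm hL hw))
  simp only [h0, dslope_same, hder, cayT_cayS hL hw] at this
  simp only [cayT_zero, hfL, cayS_self, smul_eq_mul, mul_one, sub_zero, zero_add] at this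
  exact cayS_inj hL (hm hw) hw this

lemma im_le {F : ℂ → ℂ} (hd : DifferentiableOn ℂ F UHP) (hm : MapsTo F UHP UHP)
    (hl : Tendsto (fun y : ℝ => F (Complex.I * y) / (Complex.I * y)) atTop (𝓝 1))
    {w : ℂ} (hw : w ∈ UHP) : w.im ≤ (F w).im := by
  have hinv : Tendsto (fun y : ℝ => ((y : ℂ))⁻¹) atTop (𝓝 0) := by
    have := (Complex.continuous_ofReal.tendsto 0).comp tendsto_inv_atTop_zero
    simpa [Function.comp_def] using this
  -- scaled quantities
  have hA : Tendsto (fun y : ℝ => F w * (y : ℂ)⁻¹ - I * (F (I * y) / (I * y))) atTop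
      (𝓝 (F w * 0 - I * 1)) := (hinv.const_mul _).sub (hl.const_mul _)
  have hB : Tendsto (fun y : ℝ => w * (y : ℂ)⁻¹ - I) atTop
      (𝓝 (w * 0 - I)) := (hinv.const_mul _).sub tendsto_const_nhds
  have hC : Tendsto (fun y : ℝ => (I * (F (I * y) / (I * y))).im) atTop (𝓝 (I * 1).im) :=
    (Complex.continuous_im.tendsto _).comp (hl.const_mul _)
  have hA' := (Complex.continuous_normSq.tendsto _).comp hA
  have hB' := (Complex.continuous_normSq.tendsto _).comp hB
  have hlim := le_of_tendsto_of_tendsto (hA'.mul_const w.im) ((hB'.mul hC).mul_const (F w).im) ?_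
  · simpa using hlim
  · filter_upwards [eventually_gt_atTop 0] with y hy
    have hyU : I * (y : ℂ) ∈ UHP := by simpa [UHP] using hy
    have hyC : (y : ℂ) ≠ 0 := by exact_mod_cast hy.ne'
    have sp := schwarz_pick hd hm hyU hw
    have e1 : F w * (y : ℂ)⁻¹ - I * (F (I * y) / (I * y)) = (F w - F (I * y)) * ((y⁻¹ : ℝ) : ℂ) := by
      push_cast
      field_simp [Complex.I_ne_zero]
    have e2 : w * (y : ℂ)⁻¹ - I = (w - I * y) * ((y⁻¹ : ℝ) : ℂ) := by
      push_cast
      field_simp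
    have e3 : I * (F (I * y) / (I * y)) = F (I * y) * ((y⁻¹ : ℝ) : ℂ) := by
      push_cast
      field_simp [Complex.I_ne_zero]
    simp only [Function.comp, e1, e2]
    rw [e3, Complex.im_mul_ofReal, Complex.normSq_mul, Complex.normSq_mul, Complex.normSq_ofReal]
    have e4 : (I * (y : ℂ)).im = y := by simp
    rw [e4] at sp
    have := mul_le_mul_of_nonneg_right sp (by positivity : 0 ≤ y⁻¹ * y⁻¹ * y⁻¹)
    calc _ = normSq (F w - F (I * y)) * (w.im * y) * (y⁻¹ * y⁻¹ * y⁻¹) := by field_simp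
      _ ≤ _ := this
      _ = _ := by ring

lemma im_lt {F : ℂ → ℂ} (hd : DifferentiableOn ℂ F UHP) (hm : MapsTo F UHP UHP)
    (hna : ¬ BijOn F UHP UHP)
    (hl : Tendsto (fun y : ℝ => F (Complex.I * y) / (Complex.I * y)) atTop (𝓝 1))
    {w : ℂ} (hw : w ∈ UHP) : w.im < (F w).im := by
  refine lt_of_le_of_ne (im_le hd hm hl hw) fun heq => ?_
  have han : AnalyticOnNhd ℂ (fun z => F z - z) UHP :=
    (hd.sub differentiableOn_id).analyticOnNhd uhp_isOpen
  rcases han.is_constant_or_isOpen uhp_convex.isPreconnected with ⟨c, hc⟩ | ho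
  · apply hna
    have hc0 : c.im = 0 := by
      rw [← hc w hw]; simp [heq]
    have hF : EqOn (fun z => z + c) F UHP := fun z hz => by
      have := hc z hz
      simp only at this ⊢
      rw [← this]; ring
    refine BijOn.congr ⟨?_, ?_, ?_⟩ hF
    · intro z hz
      simpa [UHP, hc0] using hz
    · intro z _ z' _ h
      simpa using h
    · intro z hz
      refine ⟨z - c, ?_, by simp⟩
      simpa [UHP, hc0] using hz
  · have := ho UHP subset_rfl uhp_isOpen
    have hmem : F w - w ∈ (fun z => F z - z) '' UHP := ⟨w, hw, rfl⟩
    obtain ⟨ε, hε, hb⟩ := Metric.isOpen_iff.1 this _ hmem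
    have hin : F w - w - ((ε / 2 : ℝ) : ℂ) * I ∈ Metric.ball (F w - w) ε := by
      rw [Metric.mem_ball, dist_eq_norm]
      have : F w - w - ((ε / 2 : ℝ) : ℂ) * I - (F w - w) = -(((ε / 2 : ℝ) : ℂ) * I) := by ring
      rw [this, norm_neg, norm_mul, Complex.norm_I, mul_one, Complex.norm_real, Real.norm_eq_abs,
        abs_of_pos (by positivity)]
      linarith
    obtain ⟨z, hz, hze⟩ := hb hin
    have h1 := im_le hd hm hl hz
    have h2 := congrArg Complex.im hze
    simp [heq] at h2
    linarith

/-- Boundary behaviour of the subordination function: with `F₁, F₂` as in the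
subordination theorem and `ω` the unique analytic self-map of `ℂ⁺` satisfying
`F₂(F₁(ω(z)) − ω(z) + z) − (F₁(ω(z)) − ω(z)) = ω(z)`, fix `a ∈ ℝ` and assume
`u₂ ∘ u₁` (where `u_j(w) = F_j(w) − w + a`) is not a conformal automorphism of
`ℂ⁺`.  If the cluster set `C(ω,a)` meets `ℂ⁺`, then `ω` extends analytically to
a neighbourhood of `a`. -/
theorem boundary_plus_part1
    (F₁ F₂ : ℂ → ℂ)
    (hd₁ : DifferentiableOn ℂ F₁ UHP) (hm₁ : Set.MapsTo F₁ UHP UHP)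
    (hd₂ : DifferentiableOn ℂ F₂ UHP) (hm₂ : Set.MapsTo F₂ UHP UHP)
    (hna₁ : ¬ Set.BijOn F₁ UHP UHP) (hna₂ : ¬ Set.BijOn F₂ UHP UHP)
    (hl₁ : Tendsto (fun y : ℝ => F₁ (Complex.I * y) / (Complex.I * y)) atTop (𝓝 1))
    (hl₂ : Tendsto (fun y : ℝ => F₂ (Complex.I * y) / (Complex.I * y)) atTop (𝓝 1))
    (ω : ℂ → ℂ)
    (hωd : DifferentiableOn ℂ ω UHP) (hωm : Set.MapsTo ω UHP UHP)
    (hωeq : ∀ z ∈ UHP, F₂ (F₁ (ω z) - ω z + z) - (F₁ (ω z) - ω z) = ω z)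
    (a : ℝ)
    (hnotaut : ¬ Set.BijOn
      (fun w => F₂ (F₁ w - w + (a : ℂ)) - (F₁ w - w + (a : ℂ)) + (a : ℂ)) UHP UHP)
    (hcluster : ∃ (L : ℂ) (z : ℕ → ℂ), L ∈ UHP ∧ (∀ n, z n ∈ UHP) ∧
      Tendsto z atTop (𝓝 (a : ℂ)) ∧ Tendsto (fun n => ω (z n)) atTop (𝓝 L)) :
    ∃ (U : Set ℂ) (g : ℂ → ℂ), IsOpen U ∧ (a : ℂ) ∈ U ∧
      DifferentiableOn ℂ g U ∧ Set.EqOn ω g (U ∩ UHP) := by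
  obtain ⟨L, zs, hL, hzs, hza, hzL⟩ := hcluster
  have i₁ := fun w hw => im_lt (w := w) hd₁ hm₁ hna₁ hl₁ hw
  have i₂ := fun w hw => im_lt (w := w) hd₂ hm₂ hna₂ hl₂ hw
  -- the fixed point map
  set f : ℂ → ℂ := fun w => F₂ (F₁ w - w + (a : ℂ)) - (F₁ w - w + (a : ℂ)) + (a : ℂ) with hf
  have hu : MapsTo (fun w => F₁ w - w + (a : ℂ)) UHP UHP := by
    intro w hw
    have := i₁ w hw
    simp [UHP]
    linarith
  have hfm : MapsTo f UHP UHP := by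
    intro w hw
    have := i₂ _ (hu hw)
    simp only [UHP, mem_ofPred_eq, f, add_im, sub_im, ofReal_im] at this ⊢
    linarith
  have hud : DifferentiableOn ℂ (fun w => F₁ w - w + (a : ℂ)) UHP :=
    (hd₁.sub differentiableOn_id).add_const _
  have hfd : DifferentiableOn ℂ f UHP :=
    ((hd₂.comp hud hu).sub hud).add_const _
  -- the two variable equation
  set Φ : ℂ × ℂ → ℂ := fun p => F₂ (F₁ p.2 - p.2 + p.1) - (F₁ p.2 - p.2) - p.2 with hΦ
  have c₁ : ContDiffAt ℂ 1 F₁ L :=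
    (hd₁.analyticAt (uhp_isOpen.mem_nhds hL)).contDiffAt
  have c₂ : ContDiffAt ℂ 1 F₂ (F₁ L - L + a) :=
    (hd₂.analyticAt (uhp_isOpen.mem_nhds (hu hL))).contDiffAt
  have c₁' : ContDiffAt ℂ 1 (fun p : ℂ × ℂ => F₁ p.2) ((a : ℂ), L) :=
    ContDiffAt.comp (g := F₁) (f := Prod.snd) ((a : ℂ), L) c₁ contDiffAt_snd
  have cu : ContDiffAt ℂ 1 (fun p : ℂ × ℂ => F₁ p.2 - p.2 + p.1) ((a : ℂ), L) :=
    (c₁'.sub contDiffAt_snd).add contDiffAt_fst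
  have c₂' : ContDiffAt ℂ 1 (fun p : ℂ × ℂ => F₂ (F₁ p.2 - p.2 + p.1)) ((a : ℂ), L) :=
    ContDiffAt.comp (g := F₂) (f := fun p : ℂ × ℂ => F₁ p.2 - p.2 + p.1) ((a : ℂ), L) c₂ cu
  have cΦ : ContDiffAt ℂ 1 Φ ((a : ℂ), L) :=
    (c₂'.sub (c₁'.sub contDiffAt_snd)).sub contDiffAt_snd
  have hpair : Tendsto (fun n => (zs n, ω (zs n))) atTop (𝓝 ((a : ℂ), L)) := hza.prodMk_nhds hzL
  have hΦω : ∀ z ∈ UHP, Φ (z, ω z) = 0 := fun z hz => by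
    have := hωeq z hz
    simp only [Φ]
    rw [this]; ring
  have hΦ0 : Φ ((a : ℂ), L) = 0 := by
    have h1 := cΦ.continuousAt.tendsto.comp hpair
    have h2 : Tendsto (Φ ∘ fun n => (zs n, ω (zs n))) atTop (𝓝 0) := by
      have : (Φ ∘ fun n => (zs n, ω (zs n))) = fun _ => 0 := by
        funext n; exact hΦω _ (hzs n)
      rw [this]; exact tendsto_const_nhds
    exact tendsto_nhds_unique h1 h2
  have hΦf : ∀ w, Φ ((a : ℂ), w) = f w - w := fun w => by
    simp only [Φ, f]; ring
  have hfL : f L = L := by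
    rw [hΦf] at hΦ0
    linear_combination hΦ0
  -- partial derivative
  have hpd : HasDerivAt (fun w => f w - w) (fderiv ℂ Φ ((a : ℂ), L) (0, 1)) L := by
    have h1 := (cΦ.differentiableAt one_ne_zero).hasFDerivAt
    have h2 : HasDerivAt (fun w : ℂ => ((a : ℂ), w)) ((0 : ℂ), (1 : ℂ)) L :=
      (hasDerivAt_const L (a : ℂ)).prodMk (hasDerivAt_id L)
    have h3 := HasFDerivAt.comp_hasDerivAt (l := Φ) (f := fun w : ℂ => ((a : ℂ), w)) L h1 h2
    have h4 : (Φ ∘ fun w : ℂ => ((a : ℂ), w)) = fun w => f w - w := funext hΦf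
    rwa [h4] at h3
  have hne : fderiv ℂ Φ ((a : ℂ), L) (0, 1) ≠ 0 := by
    intro h0
    rw [h0] at hpd
    have h1 : HasDerivAt f 1 L := by
      refine ((hpd.add (hasDerivAt_id L)).congr_deriv (zero_add 1)).congr_of_eventuallyEq ?_
      exact Eventually.of_forall fun w => by simp
    have hid := eq_id_of_deriv hfd hfm hL hfL h1
    exact hnotaut ((bijOn_id UHP).congr hid.symm)
  have hinv : (fderiv ℂ Φ ((a : ℂ), L) ∘L .inr ℂ ℂ ℂ).IsInvertible := by
    refine ⟨ContinuousLinearEquiv.unitsEquivAut ℂ (Units.mk0 _ hne), ?_⟩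
    ext
    simp
  set g := cΦ.implicitFunction one_ne_zero hinv with hg
  have hgc : ContDiffAt ℂ 1 g (a : ℂ) := cΦ.contDiffAt_implicitFunction one_ne_zero hinv
  have hiff := cΦ.eventually_apply_eq_iff_implicitFunction one_ne_zero hinv
  have hgd : ∀ᶠ z in 𝓝 (a : ℂ), DifferentiableAt ℂ g z := by
    filter_upwards [hgc.eventually (by simp)] with z hz
    exact hz.differentiableAt one_ne_zero
  obtain ⟨r, hr, hball⟩ := Metric.eventually_nhds_iff_ball.1 hgd
  have hgdo : DifferentiableOn ℂ g (Metric.ball (a : ℂ) r) :=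
    fun z hz => (hball z hz).differentiableWithinAt
  refine ⟨Metric.ball (a : ℂ) r, g, Metric.isOpen_ball, Metric.mem_ball_self hr, hgdo, ?_⟩
  -- a point near which ω = g
  obtain ⟨n, hn1, hn2⟩ := ((hpair.eventually (eventually_eventually_nhds.2 hiff)).and
    (hza.eventually (Metric.ball_mem_nhds _ hr))).exists
  have hωc : ContinuousAt ω (zs n) :=
    (hωd.continuousOn).continuousAt (uhp_isOpen.mem_nhds (hzs n))
  have hev : ω =ᶠ[𝓝 (zs n)] g := by
    have ht : Tendsto (fun z => (z, ω z)) (𝓝 (zs n)) (𝓝 (zs n, ω (zs n))) :=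
      tendsto_id.prodMk_nhds hωc
    filter_upwards [ht.eventually hn1, uhp_isOpen.mem_nhds (hzs n)] with z h1 h2
    exact (h1.1 (by rw [hΦω z h2, hΦ0])).symm
  have hopen : IsOpen (Metric.ball (a : ℂ) r ∩ UHP) := Metric.isOpen_ball.inter uhp_isOpen
  exact AnalyticOnNhd.eqOn_of_preconnected_of_eventuallyEq
    ((hωd.mono inter_subset_right).analyticOnNhd hopen)
    ((hgdo.mono inter_subset_left).analyticOnNhd hopen)
    ((convex_ball _ _).inter uhp_convex).isPreconnected ⟨hn2, hzs n⟩ hev
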